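/- For every integer k ≥ 4, one has k^k < (k‼)^(k−1); equivalently, k^(k/(k−1)) < k‼. -/

import Mathlib

/-!
From `k = 6` on the double factorial exceeds `k ^ 2`, because it contains the factors `k`, `k - 2`
and `k - 4 ≥ 2`. Raising `k ^ 2 < k‼` to the power `k - 1` suffices, since `k ≤ 2 * (k - 1)`.
The bound `k ^ 2 < k‼` fails for `k = 4` and `k = 5`, where the claim reads `4 ^ 4 < 8 ^ 3` and
`5 ^ 5 < 15 ^ 4`.
-/

open Nat

theorem self_le_doubleFactorial : ∀ n : ℕ, n ≤ n‼
  | 0 => zero_le _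
  | n + 1 => by
    rw [doubleFactorial_add_one]
    exact Nat.le_mul_of_pos_right _ (doubleFactorial_pos _)

theorem two_mul_le_doubleFactorial {n : ℕ} (hn : 4 ≤ n) : 2 * n ≤ n‼ := by
  obtain ⟨m, rfl⟩ := Nat.exists_eq_add_of_le' hn
  calc 2 * (m + 4) ≤ (m + 2) * (m + 4) := by gcongr; omega
    _ = (m + 4) * (m + 2) := mul_comm _ _
    _ ≤ (m + 4) * (m + 2)‼ := by gcongr; exact self_le_doubleFactorial _
    _ = (m + 4)‼ := (doubleFactorial_add_two _).symm

theorem sq_lt_doubleFactorial {n : ℕ} (hn : 6 ≤ n) : n ^ 2 < n‼ := by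
  obtain ⟨m, rfl⟩ := Nat.exists_eq_add_of_le' hn
  calc (m + 6) ^ 2 = (m + 6) * (m + 6) := sq _
    _ < (m + 6) * (2 * (m + 4)) := by gcongr; omega
    _ ≤ (m + 6) * (m + 4)‼ := by gcongr; exact two_mul_le_doubleFactorial (by omega)
    _ = (m + 6)‼ := (doubleFactorial_add_two _).symm

theorem pow_self_lt_doubleFactorial_pow (k : ℕ) (hk : 4 ≤ k) :
    k ^ k < (k‼) ^ (k - 1) := by
  obtain rfl | rfl | h6 : k = 4 ∨ k = 5 ∨ 6 ≤ k := by omega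
  · decide
  · decide
  · calc k ^ k ≤ k ^ (2 * (k - 1)) := Nat.pow_le_pow_right (by omega) (by omega)
      _ = (k ^ 2) ^ (k - 1) := pow_mul _ _ _
      _ < (k‼) ^ (k - 1) := Nat.pow_lt_pow_left (sq_lt_doubleFactorial h6) (by omega)
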